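/- Let 1<p<∞, let Ω ⊆ ℝ^N be an open set, and let V ≥ 0 be a strongly confining potential. Then for every ζ ∈ C_c^∞(Ω) and every φ ∈ W^{1,p}_0(Ω) ∩ L^∞(Ω), the product ζφ belongs to W^{1,p}_0(Ω;V). -/

import Mathlib

open MeasureTheory Filter Topology Metric Set ENNReal
open scoped RealInnerProductSpace

noncomputable section

/-- Euclidean space `ℝ^N`. -/
abbrev EucN (N : ℕ) := EuclideanSpace ℝ (Fin N)

/-- A test function on an open set `Ω ⊆ ℝ^N`: smooth, with compact support contained in `Ω`. -/
def IsTestFun {N : ℕ} (Ω : Set (EucN N)) (φ : EucN N → ℝ) : Prop :=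
  ContDiff ℝ (⊤ : ℕ∞) φ ∧ HasCompactSupport φ ∧ tsupport φ ⊆ Ω

/-- Pairs `(u, g)` in `L^q × L^q`, thought of as a function together with its (weak) gradient. -/
abbrev SobPair (N : ℕ) (q : ℝ≥0∞) :=
  Lp ℝ q (volume : Measure (EucN N)) × Lp (EucN N) q (volume : Measure (EucN N))

/-- A pair given (a.e.) by a test function and its gradient. -/
def IsTestPair {N : ℕ} (q : ℝ≥0∞) (Ω : Set (EucN N)) (w : SobPair N q) : Prop :=
  ∃ ψ : EucN N → ℝ, IsTestFun Ω ψ ∧ (⇑w.1 =ᵐ[volume] ψ) ∧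
    (⇑w.2 =ᵐ[volume] fun x => gradient ψ x)

theorem fact_one_le_ofReal {p : ℝ} (hp : 1 ≤ p) : Fact (1 ≤ ENNReal.ofReal p) :=
  ⟨ENNReal.one_le_ofReal.mpr hp⟩

/-- The Sobolev space `W^{1,p}_0(Ω)`, realized as the closure in `L^p × L^p` of the set of
pairs (test function, its gradient). -/
def W10 (N : ℕ) (p : ℝ) (hp : 1 ≤ p) (Ω : Set (EucN N)) :
    Set (SobPair N (ENNReal.ofReal p)) :=
  letI := fact_one_le_ofReal hp
  closure {w | IsTestPair (ENNReal.ofReal p) Ω w}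

/-- The first eigenvalue `λ_{1,p}(Ω)` (as an extended real, `∞` if there are no admissible
functions). -/
def lambda1p (N : ℕ) (p : ℝ) (hp : 1 ≤ p) (Ω : Set (EucN N)) : ℝ≥0∞ :=
  sInf {t | ∃ w ∈ W10 N p hp Ω, (∫ x, |w.1 x| ^ p) = 1 ∧
    t = ENNReal.ofReal (∫ x, ‖w.2 x‖ ^ p)}

/-- The `L^p` Poincaré constant "at infinity" `E_p(Ω)`. -/
def Einfty (N : ℕ) (p : ℝ) (hp : 1 ≤ p) (Ω : Set (EucN N)) : ℝ≥0∞ :=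
  ⨆ R ∈ Set.Ioi (0 : ℝ), lambda1p N p hp (Ω \ closure (ball (0 : EucN N) R))

/-- There is a continuous odd map from `A` to the unit sphere `S^{j-1} ⊆ ℝ^j`. -/
def HasOddMapToSphere {Z : Type*} [NormedAddCommGroup Z] (A : Set Z) (j : ℕ) : Prop :=
  ∃ f : Z → EuclideanSpace ℝ (Fin j),
    ContinuousOn f A ∧ (∀ x ∈ A, ‖f x‖ = 1) ∧ ∀ x ∈ A, f (-x) = -f x

/-- The Krasnosel'skii genus of `A` is at least `k`. -/
def genusGE {Z : Type*} [NormedAddCommGroup Z] (A : Set Z) (k : ℕ) : Prop :=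
  ∀ j : ℕ, HasOddMapToSphere A j → k ≤ j

/-- The Krasnosel'skii genus of `A`, valued in `ℕ∞`. -/
def genus {Z : Type*} [NormedAddCommGroup Z] (A : Set Z) : ℕ∞ :=
  sInf {k : ℕ∞ | ∃ j : ℕ, (j : ℕ∞) = k ∧ HasOddMapToSphere A j}

/-- The class `𝒲_{k,p}(Ω)` of compact symmetric subsets of `S_p(Ω) ∩ W^{1,p}_0(Ω)` with
genus at least `k`. -/
def SobClass (N : ℕ) (p : ℝ) (hp : 1 ≤ p) (Ω : Set (EucN N)) (k : ℕ) :
    Set (Set (SobPair N (ENNReal.ofReal p))) :=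
  letI := fact_one_le_ofReal hp
  {K | K ⊆ W10 N p hp Ω ∧ (∀ w ∈ K, (∫ x, |w.1 x| ^ p) = 1) ∧
       (∀ w ∈ K, -w ∈ K) ∧ IsCompact K ∧ genusGE K k}

/-- The `k`-th minmax Ljusternik–Schnirelmann value `λ_{k,p}^{LS}(Ω)`. -/
def lambdaLS (N : ℕ) (p : ℝ) (hp : 1 ≤ p) (Ω : Set (EucN N)) (k : ℕ) : ℝ≥0∞ :=
  ⨅ K ∈ SobClass N p hp Ω k, ⨆ w ∈ K, ENNReal.ofReal (∫ x, ‖w.2 x‖ ^ p)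

/-- `w = (u, ∇u)` is an eigenfunction of the Dirichlet `p`-Laplacian on `Ω` associated to the
eigenvalue `lam`. -/
def IsEigenfunction (N : ℕ) (p : ℝ) (hp : 1 ≤ p) (Ω : Set (EucN N)) (lam : ℝ)
    (w : SobPair N (ENNReal.ofReal p)) : Prop :=
  w ∈ W10 N p hp Ω ∧ w ≠ 0 ∧
  ∀ φ : EucN N → ℝ, IsTestFun Ω φ →
    (∫ x, ‖w.2 x‖ ^ (p - 2) * ⟪w.2 x, gradient φ x⟫) =
      lam * ∫ x, |w.1 x| ^ (p - 2) * (w.1 x) * φ x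

/-- `lam` is an eigenvalue of the Dirichlet `p`-Laplacian on `Ω`. -/
def IsEigenvalue (N : ℕ) (p : ℝ) (hp : 1 ≤ p) (Ω : Set (EucN N)) (lam : ℝ) : Prop :=
  ∃ w, IsEigenfunction N p hp Ω lam w

/-- `v = (v, ∇v)` is a non-negative weak subsolution of `-Δ_p u = lam · u^{p-1}` in `Ω`. -/
def IsSubsolution (N : ℕ) (p : ℝ) (hp : 1 ≤ p) (Ω : Set (EucN N)) (lam : ℝ)
    (v : SobPair N (ENNReal.ofReal p)) : Prop :=
  v ∈ W10 N p hp Ω ∧ (∀ᵐ x, 0 ≤ v.1 x) ∧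
  ∀ φ ∈ W10 N p hp Ω, (∀ᵐ x, 0 ≤ φ.1 x) →
    (∫ x, ‖v.2 x‖ ^ (p - 2) * ⟪v.2 x, φ.2 x⟫) ≤ lam * ∫ x, (v.1 x) ^ (p - 1) * φ.1 x

/-- A strongly confining potential. -/
def StronglyConfining (N : ℕ) (V : EucN N → ℝ) : Prop :=
  LocallyIntegrable V volume ∧ (∀ᵐ x, 0 ≤ V x) ∧
  ∃ α : ℝ → ℝ, (∀ R > (0 : ℝ), 0 < α R) ∧ MonotoneOn α (Set.Ioi 0) ∧
    Tendsto α atTop atTop ∧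
    ∀ R > (0 : ℝ), ∀ᵐ x, x ∉ ball (0 : EucN N) R → α R ≤ V x

/-- Triples `(u, g, h)` in `L^q × L^q × L^q`; `h` plays the role of `V^{1/p} u` in the weighted
Sobolev space. -/
abbrev SobTriple (N : ℕ) (q : ℝ≥0∞) :=
  Lp ℝ q (volume : Measure (EucN N)) × Lp (EucN N) q (volume : Measure (EucN N)) ×
    Lp ℝ q (volume : Measure (EucN N))

/-- A triple given (a.e.) by a test function, its gradient, and `V^{1/p}` times it. -/
def IsTestTriple {N : ℕ} (q : ℝ≥0∞) (p : ℝ) (Ω : Set (EucN N)) (V : EucN N → ℝ)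
    (w : SobTriple N q) : Prop :=
  ∃ ψ : EucN N → ℝ, IsTestFun Ω ψ ∧ (⇑w.1 =ᵐ[volume] ψ) ∧
    (⇑w.2.1 =ᵐ[volume] fun x => gradient ψ x) ∧
    (⇑w.2.2 =ᵐ[volume] fun x => (V x) ^ (1/p) * ψ x)

/-- The weighted Sobolev space `W^{1,p}_0(Ω; V)`, realized as a closure of triples coming from
test functions; the norm topology of `L^p × L^p × L^p` on such triples corresponds exactly to
the weighted Sobolev norm `(∫|∇u|^p + ∫(1+V)|u|^p)^{1/p}`. -/
def W10V (N : ℕ) (p : ℝ) (hp : 1 ≤ p) (Ω : Set (EucN N)) (V : EucN N → ℝ) :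
    Set (SobTriple N (ENNReal.ofReal p)) :=
  letI := fact_one_le_ofReal hp
  closure {w | IsTestTriple (ENNReal.ofReal p) p Ω V w}

/-- The class `𝒲_{k,p}(Ω; V)` for the weighted space. -/
def SobClassV (N : ℕ) (p : ℝ) (hp : 1 ≤ p) (Ω : Set (EucN N)) (V : EucN N → ℝ) (k : ℕ) :
    Set (Set (SobTriple N (ENNReal.ofReal p))) :=
  letI := fact_one_le_ofReal hp
  {K | K ⊆ W10V N p hp Ω V ∧ (∀ w ∈ K, (∫ x, |w.1 x| ^ p) = 1) ∧
       (∀ w ∈ K, -w ∈ K) ∧ IsCompact K ∧ genusGE K k}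

/-- The perturbed minmax value `λ_{k,p}^{LS}(Ω; ε V)`, for the functional
`G(φ) = ∫|∇φ|^p + ε ∫ V |φ|^p`. -/
def lambdaLSV (N : ℕ) (p : ℝ) (hp : 1 ≤ p) (Ω : Set (EucN N)) (V : EucN N → ℝ)
    (ε : ℝ) (k : ℕ) : ℝ≥0∞ :=
  ⨅ K ∈ SobClassV N p hp Ω V k, ⨆ w ∈ K,
    ENNReal.ofReal ((∫ x, ‖w.2.1 x‖ ^ p) + ε * ∫ x, |w.2.2 x| ^ p)

/-- `w` is a constrained critical point, at level `lam`, of the perturbed functional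
`G(φ) = ∫|∇φ|^p + ε ∫ V |φ|^p` on the unit sphere of `L^p`. -/
def IsCriticalV (N : ℕ) (p : ℝ) (hp : 1 ≤ p) (Ω : Set (EucN N)) (V : EucN N → ℝ)
    (ε : ℝ) (lam : ℝ) (w : SobTriple N (ENNReal.ofReal p)) : Prop :=
  w ∈ W10V N p hp Ω V ∧ (∫ x, |w.1 x| ^ p) = 1 ∧
  ∀ φ : EucN N → ℝ, IsTestFun Ω φ →
    (∫ x, ‖w.2.1 x‖ ^ (p - 2) * ⟪w.2.1 x, gradient φ x⟫)
      + ε * ∫ x, V x * |w.1 x| ^ (p - 2) * (w.1 x) * φ x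
    = lam * ∫ x, |w.1 x| ^ (p - 2) * (w.1 x) * φ x

/-- The embedding `W^{1,p}_0(Ω) ↪ L^p(Ω)` is compact: every bounded sequence in `W^{1,p}_0(Ω)`
has a subsequence converging strongly in `L^p`. -/
def CompactSobolevEmbedding (N : ℕ) (p : ℝ) (hp : 1 ≤ p) (Ω : Set (EucN N)) : Prop :=
  ∀ w : ℕ → SobPair N (ENNReal.ofReal p), (∀ n, w n ∈ W10 N p hp Ω) →
    (∃ M : ℝ≥0∞, M ≠ ⊤ ∧ ∀ n, eLpNorm (⇑(w n).1) (ENNReal.ofReal p) volume ≤ M ∧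
        eLpNorm (⇑(w n).2) (ENNReal.ofReal p) volume ≤ M) →
    ∃ σ : ℕ → ℕ, StrictMono σ ∧ ∃ u : EucN N → ℝ, MemLp u (ENNReal.ofReal p) volume ∧
      Tendsto (fun n => eLpNorm (⇑(w (σ n)).1 - u) (ENNReal.ofReal p) volume) atTop (𝓝 0)

/-!
Approximate `φ` in `W^{1,p}_0` by test functions, almost everywhere along a subsequence. Composing
them with a compactly supported smooth function that is the identity near the range of `φ` makes
the approximants `ψₙ` uniformly bounded and keeps the convergence in `W^{1,p}`, because the
derivative of that function tends to `1` along the sequence. Then the `ζ ψₙ` are test functions,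
and every term of `ζ ψₙ - ζ φ`, of its gradient and of `V^{1/p} (ζ ψₙ - ζ φ)` is either a bounded,
almost everywhere convergent sequence times a fixed `L^p` function, handled by dominated
convergence, or a bounded function times `∇ψₙ - ∇φ`. The weight enters only through
`V^{1/p} ζ ∈ L^p`, that is, through the integrability of `V` on the support of `ζ`.
-/

section LpConvergence

variable {α E 𝕜 : Type*} [MeasurableSpace α] {μ : Measure α} [NormedAddCommGroup E] {q : ℝ≥0∞}

theorem tendsto_eLpNorm_sub_of_dominated {F : ℕ → α → E} {f : α → E} {bound : α → ℝ}
    (hq : q ≠ ∞) (hF : ∀ n, AEStronglyMeasurable (F n) μ) (hbound : MemLp bound q μ)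
    (hF_le : ∀ n, ∀ᵐ x ∂μ, ‖F n x‖ ≤ bound x)
    (hF_lim : ∀ᵐ x ∂μ, Tendsto (fun n ↦ F n x) atTop (𝓝 (f x))) :
    Tendsto (fun n ↦ eLpNorm (fun x ↦ F n x - f x) q μ) atTop (𝓝 0) := by
  rcases eq_or_ne q 0 with rfl | hq0
  · simp
  have hr : 0 < q.toReal := ENNReal.toReal_pos hq0 hq
  have hf : AEStronglyMeasurable f μ := aestronglyMeasurable_of_tendsto_ae atTop hF hF_lim
  have hdiff_le (n : ℕ) : ∀ᵐ x ∂μ, ‖F n x - f x‖ₑ ≤ ‖2 * bound x‖ₑ := by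
    filter_upwards [ae_all_iff.2 hF_le, hF_lim] with x hx hlim
    have hfx : ‖f x‖ ≤ bound x := le_of_tendsto' hlim.norm hx
    refine enorm_le_iff_norm_le.2 ((norm_sub_le _ _).trans ?_)
    linarith [hx n, le_abs_self (2 * bound x), Real.norm_eq_abs (2 * bound x)]
  have hlintegral : Tendsto (fun n ↦ ∫⁻ x, ‖F n x - f x‖ₑ ^ q.toReal ∂μ) atTop
      (𝓝 (∫⁻ _, 0 ∂μ)) := by
    refine tendsto_lintegral_of_dominated_convergence' (fun x ↦ ‖2 * bound x‖ₑ ^ q.toReal)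
      (fun n ↦ ((hF n).sub hf).enorm.pow_const _) (fun n ↦ ?_)
      (lintegral_rpow_enorm_lt_top_of_eLpNorm_lt_top hq0 hq (hbound.const_mul 2).2).ne ?_
    · filter_upwards [hdiff_le n] with x hx using ENNReal.rpow_le_rpow hx hr.le
    · filter_upwards [hF_lim] with x hx
      simpa [hr] using ((hx.sub_const (f x)).enorm).ennrpow_const q.toReal
  simp_rw [eLpNorm_eq_lintegral_rpow_enorm_toReal hq0 hq]
  simpa [hr] using hlintegral.ennrpow_const (1 / q.toReal)

theorem tendsto_eLpNorm_smul_const_sub_smul_const [NormedRing 𝕜] [Module 𝕜 E] [IsBoundedSMul 𝕜 E]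
    {a : ℕ → α → 𝕜} {b : α → 𝕜} {g : α → E} {C : ℝ} (hq : q ≠ ∞)
    (ha : ∀ n, AEStronglyMeasurable (a n) μ) (ha_le : ∀ n, ∀ᵐ x ∂μ, ‖a n x‖ ≤ C)
    (ha_lim : ∀ᵐ x ∂μ, Tendsto (fun n ↦ a n x) atTop (𝓝 (b x))) (hg : MemLp g q μ) :
    Tendsto (fun n ↦ eLpNorm (fun x ↦ a n x • g x - b x • g x) q μ) atTop (𝓝 0) := by
  refine tendsto_eLpNorm_sub_of_dominated hq (fun n ↦ (ha n).smul hg.1) (hg.norm.const_mul C)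
    (fun n ↦ ?_) (ha_lim.mono fun x hx ↦ hx.smul_const (g x))
  filter_upwards [ha_le n] with x hx
  refine (norm_smul_le _ _).trans ?_
  gcongr

theorem tendsto_eLpNorm_add_sub_add {f g : ℕ → α → E} {u v : α → E} (hq : 1 ≤ q)
    (hf : ∀ n, AEStronglyMeasurable (f n) μ) (hu : AEStronglyMeasurable u μ)
    (hg : ∀ n, AEStronglyMeasurable (g n) μ) (hv : AEStronglyMeasurable v μ)
    (hfu : Tendsto (fun n ↦ eLpNorm (fun x ↦ f n x - u x) q μ) atTop (𝓝 0))
    (hgv : Tendsto (fun n ↦ eLpNorm (fun x ↦ g n x - v x) q μ) atTop (𝓝 0)) :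
    Tendsto (fun n ↦ eLpNorm (fun x ↦ (f n x + g n x) - (u x + v x)) q μ) atTop (𝓝 0) := by
  refine tendsto_of_tendsto_of_tendsto_of_le_of_le tendsto_const_nhds
    (by simpa only [add_zero] using hfu.add hgv) (fun n ↦ zero_le) fun n ↦ ?_
  simp only [add_sub_add_comm]
  exact eLpNorm_add_le ((hf n).sub hu) ((hg n).sub hv) hq

theorem tendsto_eLpNorm_smul_sub_smul [NormedRing 𝕜] [Module 𝕜 E] [IsBoundedSMul 𝕜 E]
    {a : ℕ → α → 𝕜} {b : α → 𝕜} {f : ℕ → α → E} {g : α → E} {C : ℝ} (hq1 : 1 ≤ q) (hq : q ≠ ∞)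
    (ha : ∀ n, AEStronglyMeasurable (a n) μ) (ha_le : ∀ n, ∀ᵐ x ∂μ, ‖a n x‖ ≤ C)
    (ha_lim : ∀ᵐ x ∂μ, Tendsto (fun n ↦ a n x) atTop (𝓝 (b x)))
    (hf : ∀ n, AEStronglyMeasurable (f n) μ) (hg : MemLp g q μ)
    (hfg : Tendsto (fun n ↦ eLpNorm (fun x ↦ f n x - g x) q μ) atTop (𝓝 0)) :
    Tendsto (fun n ↦ eLpNorm (fun x ↦ a n x • f n x - b x • g x) q μ) atTop (𝓝 0) := by
  have hb : AEStronglyMeasurable b μ := aestronglyMeasurable_of_tendsto_ae atTop ha ha_lim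
  have hdiff : Tendsto (fun n ↦ eLpNorm (fun x ↦ a n x • (f n x - g x) - 0) q μ) atTop (𝓝 0) := by
    refine tendsto_of_tendsto_of_tendsto_of_le_of_le tendsto_const_nhds
      (by simpa only [mul_zero] using ENNReal.Tendsto.const_mul hfg (Or.inr ofReal_ne_top))
      (fun n ↦ zero_le) fun n ↦ eLpNorm_le_mul_eLpNorm_of_ae_le_mul (c := C) ?_ q
    filter_upwards [ha_le n] with x hx
    rw [sub_zero]
    refine (norm_smul_le _ _).trans ?_
    gcongr
  have hsum := tendsto_eLpNorm_add_sub_add hq1 (fun n ↦ (ha n).smul ((hf n).sub hg.1))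
    aestronglyMeasurable_zero (fun n ↦ (ha n).smul hg.1) (hb.smul hg.1) hdiff
    (tendsto_eLpNorm_smul_const_sub_smul_const hq ha ha_le ha_lim hg)
  simpa [← smul_add] using hsum

theorem memLp_rpow_one_div_mul_of_hasCompactSupport [TopologicalSpace α] [T2Space α]
    [OpensMeasurableSpace α] [SecondCountableTopology α] {p : ℝ} (hp : 0 < p) {V ζ : α → ℝ}
    (hV : LocallyIntegrable V μ) (hV0 : ∀ᵐ x ∂μ, 0 ≤ V x) (hζ : Continuous ζ)
    (hζc : HasCompactSupport ζ) :
    MemLp (fun x ↦ V x ^ (1 / p) * ζ x) (ENNReal.ofReal p) μ := by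
  have hmeas : AEStronglyMeasurable (fun x ↦ V x ^ (1 / p) * ζ x) μ :=
    (hV.aestronglyMeasurable.aemeasurable.pow_const (1 / p)).aestronglyMeasurable.mul
      hζ.aestronglyMeasurable
  rw [← integrable_norm_rpow_iff hmeas (ofReal_pos.2 hp).ne' ofReal_ne_top, toReal_ofReal hp.le]
  have hζp : HasCompactSupport (fun x ↦ |ζ x| ^ p) :=
    hζc.comp_left (g := fun t : ℝ ↦ |t| ^ p) (by simp [hp.ne'])
  refine (hV.integrable_smul_left_of_hasCompactSupport
    (hζ.abs.rpow_const fun _ ↦ Or.inr hp.le) hζp).congr ?_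
  filter_upwards [hV0] with x hx
  have hroot : 0 ≤ V x ^ (1 / p) := Real.rpow_nonneg hx _
  rw [norm_mul, Real.norm_of_nonneg hroot, Real.mul_rpow hroot (norm_nonneg _),
    ← Real.rpow_mul hx, one_div_mul_cancel hp.ne', Real.rpow_one, Real.norm_eq_abs, smul_eq_mul,
    mul_comm]

end LpConvergence

section Gradient

variable {F : Type*} [NormedAddCommGroup F] [InnerProductSpace ℝ F] [CompleteSpace F]
  {f g : F → ℝ} {x : F}

theorem gradient_fun_mul (hf : DifferentiableAt ℝ f x) (hg : DifferentiableAt ℝ g x) :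
    gradient (fun y ↦ f y * g y) x = f x • gradient g x + g x • gradient f x := by
  simp [gradient, fderiv_fun_mul hf hg]

theorem gradient_comp {T : ℝ → ℝ} (hT : DifferentiableAt ℝ T (f x))
    (hf : DifferentiableAt ℝ f x) : gradient (T ∘ f) x = deriv T (f x) • gradient f x := by
  simp [gradient, (hT.hasDerivAt.comp_hasFDerivAt x hf.hasFDerivAt).fderiv]

theorem continuous_gradient_of_contDiff (hf : ContDiff ℝ 1 f) : Continuous (gradient f) :=
  (InnerProductSpace.toDual ℝ F).symm.continuous.comp (hf.continuous_fderiv one_ne_zero)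

theorem hasCompactSupport_gradient (hf : HasCompactSupport f) : HasCompactSupport (gradient f) :=
  (hf.fderiv (𝕜 := ℝ)).comp_left (map_zero (InnerProductSpace.toDual ℝ F).symm)

variable [MeasurableSpace F] [BorelSpace F] [SecondCountableTopology F] {μ : Measure F} {q : ℝ≥0∞}
  {ψ : ℕ → F → ℝ} {u : F → ℝ} {G : F → F} {C : ℝ}

theorem tendsto_eLpNorm_gradient_comp_sub {T : ℝ → ℝ} (hq1 : 1 ≤ q) (hq : q ≠ ∞)
    (hT : ContDiff ℝ 1 T) (hT_le : ∀ t, ‖deriv T t‖ ≤ C) (hψ : ∀ n, ContDiff ℝ 1 (ψ n))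
    (hψ_lim : ∀ᵐ x ∂μ, Tendsto (fun n ↦ ψ n x) atTop (𝓝 (u x))) (hG : MemLp G q μ)
    (hψ_grad : Tendsto (fun n ↦ eLpNorm (fun x ↦ gradient (ψ n) x - G x) q μ) atTop (𝓝 0)) :
    Tendsto (fun n ↦ eLpNorm (fun x ↦ gradient (T ∘ ψ n) x - deriv T (u x) • G x) q μ)
      atTop (𝓝 0) := by
  have hT' : Continuous (deriv T) := hT.continuous_deriv le_rfl
  have hgrad (n : ℕ) (x : F) : gradient (T ∘ ψ n) x = deriv T (ψ n x) • gradient (ψ n) x :=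
    gradient_comp (hT.differentiable one_ne_zero _) ((hψ n).differentiable one_ne_zero x)
  simp only [hgrad]
  exact tendsto_eLpNorm_smul_sub_smul hq1 hq
    (fun n ↦ (hT'.comp (hψ n).continuous).aestronglyMeasurable)
    (fun n ↦ ae_of_all _ fun x ↦ hT_le (ψ n x))
    (hψ_lim.mono fun x hx ↦ (hT'.tendsto (u x)).comp hx)
    (fun n ↦ (continuous_gradient_of_contDiff (hψ n)).aestronglyMeasurable) hG hψ_grad

theorem tendsto_eLpNorm_gradient_mul_sub [IsFiniteMeasureOnCompacts μ] {ζ : F → ℝ} (hq1 : 1 ≤ q)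
    (hq : q ≠ ∞) (hζ : ContDiff ℝ 1 ζ) (hζc : HasCompactSupport ζ)
    (hψ : ∀ n, ContDiff ℝ 1 (ψ n)) (hψ_le : ∀ n, ∀ᵐ x ∂μ, ‖ψ n x‖ ≤ C)
    (hψ_lim : ∀ᵐ x ∂μ, Tendsto (fun n ↦ ψ n x) atTop (𝓝 (u x))) (hG : MemLp G q μ)
    (hψ_grad : Tendsto (fun n ↦ eLpNorm (fun x ↦ gradient (ψ n) x - G x) q μ) atTop (𝓝 0)) :
    Tendsto (fun n ↦ eLpNorm (fun x ↦ gradient (fun y ↦ ζ y * ψ n y) x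
      - (u x • gradient ζ x + ζ x • G x)) q μ) atTop (𝓝 0) := by
  have hgrad (n : ℕ) (x : F) : gradient (fun y ↦ ζ y * ψ n y) x =
      ψ n x • gradient ζ x + ζ x • gradient (ψ n) x :=
    (gradient_fun_mul (hζ.differentiable one_ne_zero x)
      ((hψ n).differentiable one_ne_zero x)).trans (add_comm _ _)
  obtain ⟨Z, hZ⟩ := hζc.exists_bound_of_continuous hζ.continuous
  have hψm (n : ℕ) : AEStronglyMeasurable (ψ n) μ := (hψ n).continuous.aestronglyMeasurable
  have hψ'm (n : ℕ) : AEStronglyMeasurable (gradient (ψ n)) μ :=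
    (continuous_gradient_of_contDiff (hψ n)).aestronglyMeasurable
  have hum : AEStronglyMeasurable u μ := aestronglyMeasurable_of_tendsto_ae atTop hψm hψ_lim
  have hζm : AEStronglyMeasurable ζ μ := hζ.continuous.aestronglyMeasurable
  have hζ' : MemLp (gradient ζ) q μ :=
    (continuous_gradient_of_contDiff hζ).memLp_of_hasCompactSupport (hasCompactSupport_gradient hζc)
  simp only [hgrad]
  exact tendsto_eLpNorm_add_sub_add hq1
    (fun n ↦ (hψm n).smul hζ'.1) (hum.smul hζ'.1) (fun n ↦ hζm.smul (hψ'm n)) (hζm.smul hG.1)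
    (tendsto_eLpNorm_smul_const_sub_smul_const hq hψm hψ_le hψ_lim hζ')
    (tendsto_eLpNorm_smul_sub_smul hq1 hq (fun _ ↦ hζm) (fun _ ↦ ae_of_all _ hZ)
      (ae_of_all _ fun _ ↦ tendsto_const_nhds) hψ'm hG hψ_grad)

end Gradient

theorem exists_contDiff_hasCompactSupport_eventuallyEq_id {E : Type*} [NormedAddCommGroup E]
    [NormedSpace ℝ E] [FiniteDimensional ℝ E] (r : ℝ) :
    ∃ T : E → E, ContDiff ℝ (⊤ : ℕ∞) T ∧ HasCompactSupport T ∧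
      ∀ x, ‖x‖ ≤ r → T =ᶠ[𝓝 x] id := by
  let b : ContDiffBump (0 : E) := ⟨|r| + 1, |r| + 2, by positivity, by linarith⟩
  refine ⟨fun x ↦ b x • x, b.contDiff.smul contDiff_id, b.hasCompactSupport.smul_right,
    fun x hx ↦ ?_⟩
  have hxb : x ∈ ball 0 b.rIn := mem_ball_zero_iff.2 <| by linarith [le_abs_self r]
  filter_upwards [b.eventuallyEq_one_of_mem_ball hxb] with y hy
  simp [hy]

namespace IsTestFun

variable {N : ℕ} {Ω : Set (EucN N)} {φ : EucN N → ℝ} {q : ℝ≥0∞}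

theorem continuous (hφ : IsTestFun Ω φ) : Continuous φ := hφ.1.continuous

theorem contDiff_one (hφ : IsTestFun Ω φ) : ContDiff ℝ 1 φ := hφ.1.of_le (by simp)

theorem continuous_gradient (hφ : IsTestFun Ω φ) : Continuous (gradient φ) :=
  continuous_gradient_of_contDiff hφ.contDiff_one

theorem memLp (hφ : IsTestFun Ω φ) : MemLp φ q :=
  hφ.continuous.memLp_of_hasCompactSupport hφ.2.1

theorem memLp_gradient (hφ : IsTestFun Ω φ) : MemLp (gradient φ) q :=
  hφ.continuous_gradient.memLp_of_hasCompactSupport (hasCompactSupport_gradient hφ.2.1)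

theorem mul_contDiff (hφ : IsTestFun Ω φ) {f : EucN N → ℝ} (hf : ContDiff ℝ (⊤ : ℕ∞) f) :
    IsTestFun Ω (fun x ↦ φ x * f x) :=
  ⟨hφ.1.mul hf, hφ.2.1.mul_right, tsupport_mul_subset_left.trans hφ.2.2⟩

theorem contDiff_comp (hφ : IsTestFun Ω φ) {T : ℝ → ℝ} (hT : ContDiff ℝ (⊤ : ℕ∞) T)
    (hT0 : T 0 = 0) : IsTestFun Ω (T ∘ φ) :=
  ⟨hT.comp hφ.1, hφ.2.1.comp_left hT0, (tsupport_comp_subset hT0 φ).trans hφ.2.2⟩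

end IsTestFun

section Sobolev

variable {N : ℕ} {p : ℝ} {Ω : Set (EucN N)} {V : EucN N → ℝ}
  {w : SobPair N (ENNReal.ofReal p)}

theorem exists_isTestFun_tendsto_of_mem_W10 (hp : 1 ≤ p) (hw : w ∈ W10 N p hp Ω) :
    ∃ ψ : ℕ → EucN N → ℝ, (∀ n, IsTestFun Ω (ψ n)) ∧
      (∀ᵐ x, Tendsto (fun n ↦ ψ n x) atTop (𝓝 (w.1 x))) ∧
      Tendsto (fun n ↦ eLpNorm (fun x ↦ gradient (ψ n) x - w.2 x) (ENNReal.ofReal p) volume)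
        atTop (𝓝 0) := by
  have := fact_one_le_ofReal hp
  obtain ⟨v, hv, hvw⟩ := mem_closure_iff_seq_limit.1 hw
  obtain ⟨k, hk, hae⟩ := (tendstoInMeasure_of_tendsto_Lp hvw.fst_nhds).exists_seq_tendsto_ae
  choose ψ hψ hvψ hvgrad using fun n ↦ hv (k n)
  refine ⟨ψ, hψ, ?_, ?_⟩
  · filter_upwards [hae, ae_all_iff.2 hvψ] with x hx hvx
    simpa only [hvx] using hx
  · refine ((Lp.tendsto_Lp_iff_tendsto_eLpNorm' _ _).1
      (hvw.snd_nhds.comp hk.tendsto_atTop)).congr fun n ↦ eLpNorm_congr_ae ?_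
    filter_upwards [hvgrad n] with x hx
    simp only [Function.comp_apply, Pi.sub_apply, hx]

theorem exists_bounded_isTestFun_tendsto_of_mem_W10 (hp : 1 ≤ p) (hw : w ∈ W10 N p hp Ω)
    {M : ℝ} (hM : ∀ᵐ x, |w.1 x| ≤ M) :
    ∃ (ψ : ℕ → EucN N → ℝ) (C : ℝ), (∀ n, IsTestFun Ω (ψ n)) ∧ (∀ n x, ‖ψ n x‖ ≤ C) ∧
      (∀ᵐ x, Tendsto (fun n ↦ ψ n x) atTop (𝓝 (w.1 x))) ∧
      Tendsto (fun n ↦ eLpNorm (fun x ↦ gradient (ψ n) x - w.2 x) (ENNReal.ofReal p) volume)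
        atTop (𝓝 0) := by
  obtain ⟨ψ, hψ, hψ_lim, hψ_grad⟩ := exists_isTestFun_tendsto_of_mem_W10 hp hw
  obtain ⟨T, hT, hTc, hT_id⟩ := exists_contDiff_hasCompactSupport_eventuallyEq_id (E := ℝ) |M|
  have hT0 : T 0 = 0 := (hT_id 0 (by simp)).eq_of_nhds
  obtain ⟨C, hC⟩ := hTc.exists_bound_of_continuous hT.continuous
  obtain ⟨C', hC'⟩ := hTc.deriv.exists_bound_of_continuous (hT.continuous_deriv (by simp))
  have hT_near : ∀ᵐ x, T =ᶠ[𝓝 (w.1 x)] id := by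
    filter_upwards [hM] with x hx using hT_id _ (hx.trans (le_abs_self M))
  refine ⟨fun n ↦ T ∘ ψ n, C, fun n ↦ (hψ n).contDiff_comp hT hT0, fun n x ↦ hC _, ?_, ?_⟩
  · filter_upwards [hψ_lim, hT_near] with x hx hTx
    simpa only [hTx.eq_of_nhds] using! (hT.continuous.tendsto _).comp hx
  · refine (tendsto_eLpNorm_gradient_comp_sub (one_le_ofReal.2 hp) ofReal_ne_top
      (hT.of_le (by simp)) hC' (fun n ↦ (hψ n).contDiff_one) hψ_lim (Lp.memLp w.2)
      hψ_grad).congr fun n ↦ eLpNorm_congr_ae ?_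
    filter_upwards [hT_near] with x hTx
    simp only [hTx.deriv_eq, deriv_id, one_smul]

theorem exists_mem_W10V_of_tendsto (hp : 1 ≤ p) (hV : LocallyIntegrable V)
    (hV0 : ∀ᵐ x, 0 ≤ V x) {χ : ℕ → EucN N → ℝ} {u : EucN N → ℝ} {g : EucN N → EucN N}
    (hχ : ∀ n, IsTestFun Ω (χ n)) (hu : AEStronglyMeasurable u) (hg : AEStronglyMeasurable g)
    (hχu : Tendsto (fun n ↦ eLpNorm (fun x ↦ χ n x - u x) (ENNReal.ofReal p) volume)
      atTop (𝓝 0))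
    (hχg : Tendsto (fun n ↦ eLpNorm (fun x ↦ gradient (χ n) x - g x) (ENNReal.ofReal p) volume)
      atTop (𝓝 0))
    (hχV : Tendsto (fun n ↦ eLpNorm (fun x ↦ V x ^ (1 / p) * χ n x - V x ^ (1 / p) * u x)
      (ENNReal.ofReal p) volume) atTop (𝓝 0)) :
    ∃ ω ∈ W10V N p hp Ω V, (⇑ω.1 =ᵐ[volume] u) ∧ (⇑ω.2.1 =ᵐ[volume] g) ∧
      (⇑ω.2.2 =ᵐ[volume] fun x ↦ V x ^ (1 / p) * u x) := by
  have := fact_one_le_ofReal hp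
  have hq : 1 ≤ ENNReal.ofReal p := Fact.out
  have hroot : AEStronglyMeasurable (fun x ↦ V x ^ (1 / p)) :=
    (hV.aestronglyMeasurable.aemeasurable.pow_const (1 / p)).aestronglyMeasurable
  have hVχ (n : ℕ) : MemLp (fun x ↦ V x ^ (1 / p) * χ n x) (ENNReal.ofReal p) :=
    memLp_rpow_one_div_mul_of_hasCompactSupport (by linarith) hV hV0 (hχ n).continuous (hχ n).2.1
  have hup := Lp.memLp_of_cauchy_tendsto hq (fun n ↦ (hχ n).memLp) u hu hχu
  have hgp := Lp.memLp_of_cauchy_tendsto hq (fun n ↦ (hχ n).memLp_gradient) g hg hχg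
  have hVup := Lp.memLp_of_cauchy_tendsto hq hVχ _ (hroot.mul hu) hχV
  refine ⟨(hup.toLp, hgp.toLp, hVup.toLp), ?_, hup.coeFn_toLp, hgp.coeFn_toLp, hVup.coeFn_toLp⟩
  refine mem_closure_of_tendsto (b := atTop)
    (((Lp.tendsto_Lp_iff_tendsto_eLpNorm'' _ (fun n ↦ (hχ n).memLp) _ hup).2 hχu).prodMk_nhds
      (((Lp.tendsto_Lp_iff_tendsto_eLpNorm'' _ (fun n ↦ (hχ n).memLp_gradient) _ hgp).2
        hχg).prodMk_nhds ((Lp.tendsto_Lp_iff_tendsto_eLpNorm'' _ hVχ _ hVup).2 hχV))) ?_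
  exact .of_forall fun n ↦
    ⟨χ n, hχ n, (hχ n).memLp.coeFn_toLp, (hχ n).memLp_gradient.coeFn_toLp, (hVχ n).coeFn_toLp⟩

end Sobolev

theorem statement9_general {N : ℕ} {p : ℝ} (hp : 1 ≤ p) {Ω U : Set (EucN N)}
    {V : EucN N → ℝ} (hV : LocallyIntegrable V) (hV0 : ∀ᵐ x, 0 ≤ V x)
    {ζ : EucN N → ℝ} (hζ : IsTestFun Ω ζ)
    {w : SobPair N (ENNReal.ofReal p)} (hw : w ∈ W10 N p hp U)
    {M : ℝ} (hM : ∀ᵐ x, |w.1 x| ≤ M) :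
    ∃ ω ∈ W10V N p hp Ω V,
      (⇑ω.1 =ᵐ[volume] fun x ↦ ζ x * w.1 x) ∧
      (⇑ω.2.1 =ᵐ[volume] fun x ↦ w.1 x • gradient ζ x + ζ x • w.2 x) ∧
      (⇑ω.2.2 =ᵐ[volume] fun x ↦ V x ^ (1 / p) * (ζ x * w.1 x)) := by
  obtain ⟨ψ, C, hψ, hψ_le, hψ_lim, hψ_grad⟩ :=
    exists_bounded_isTestFun_tendsto_of_mem_W10 hp hw hM
  have hmul_lim {f : EucN N → ℝ} (hf : MemLp f (ENNReal.ofReal p)) : Tendsto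
      (fun n ↦ eLpNorm (fun x ↦ f x * ψ n x - f x * w.1 x) (ENNReal.ofReal p) volume)
      atTop (𝓝 0) := by
    simpa only [smul_eq_mul, mul_comm] using tendsto_eLpNorm_smul_const_sub_smul_const ofReal_ne_top
      (fun n ↦ (hψ n).continuous.aestronglyMeasurable) (fun n ↦ ae_of_all _ (hψ_le n)) hψ_lim hf
  have hζV : MemLp (fun x ↦ V x ^ (1 / p) * ζ x) (ENNReal.ofReal p) :=
    memLp_rpow_one_div_mul_of_hasCompactSupport (by linarith) hV hV0 hζ.continuous hζ.2.1
  have hζm : AEStronglyMeasurable ζ := hζ.continuous.aestronglyMeasurable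
  have hw1 : AEStronglyMeasurable w.1 := Lp.aestronglyMeasurable w.1
  exact exists_mem_W10V_of_tendsto hp hV hV0 (fun n ↦ hζ.mul_contDiff (hψ n).1)
    (hζm.mul hw1)
    ((hw1.smul hζ.continuous_gradient.aestronglyMeasurable).add
      (hζm.smul (Lp.aestronglyMeasurable w.2)))
    (hmul_lim hζ.memLp)
    (tendsto_eLpNorm_gradient_mul_sub (one_le_ofReal.2 hp) ofReal_ne_top hζ.contDiff_one hζ.2.1
      (fun n ↦ (hψ n).contDiff_one) (fun n ↦ ae_of_all _ (hψ_le n)) hψ_lim (Lp.memLp w.2) hψ_grad)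
    (by simpa only [mul_assoc] using hmul_lim hζV)

theorem statement9 (N : ℕ) (p : ℝ) (hp1 : 1 < p) (Ω : Set (EucN N)) (hΩ : IsOpen Ω)
    (V : EucN N → ℝ) (hV : StronglyConfining N V)
    (ζ : EucN N → ℝ) (hζ : IsTestFun Ω ζ)
    (w : SobPair N (ENNReal.ofReal p)) (hw : w ∈ W10 N p hp1.le Ω)
    (M : ℝ) (hbdd : ∀ᵐ x, |w.1 x| ≤ M) :
    ∃ ω ∈ W10V N p hp1.le Ω V,
      (⇑ω.1 =ᵐ[volume] fun x => ζ x * w.1 x) ∧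
      (⇑ω.2.1 =ᵐ[volume] fun x => (w.1 x) • gradient ζ x + (ζ x) • w.2 x) ∧
      (⇑ω.2.2 =ᵐ[volume] fun x => (V x) ^ (1/p) * (ζ x * w.1 x)) :=
  statement9_general hp1.le hV.1 hV.2.1 hζ hw hbdd

end
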